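/- Let R be a regular F-finite domain of prime characteristic p, let 𝔞 be a nonzero ideal of R, and let c be a nonnegative p-rational number (i.e., of the form k/p^n). Then there exists a power q of p such that 𝔞^[c + 1/q] = 𝔞^[c]; consequently 𝔞^[c'] = 𝔞^[c] for all p-rational c' ≥ c sufficiently close to c (right constancy of rational Frobenius powers). -/

import Mathlib

open scoped BigOperators

/-- The `q`-th bracket power of an ideal: the ideal generated by `q`-th powers
of elements of `a`. -/
def bracketPow {R : Type*} [CommRing R] (a : Ideal R) (q : ℕ) : Ideal R :=
  Ideal.span ((fun x => x ^ q) '' (a : Set R))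

/-- The generalized `k`-th Frobenius power of an ideal, defined via the base-`p`
digits of `k`:  `𝔞^[k] = ∏ᵢ (𝔞^[pⁱ])^(kᵢ)` where `kᵢ = k / pⁱ % p` is the `i`-th
base-`p` digit of `k` (digits with index `> k` vanish, so the product below suffices). -/
def frobPow {R : Type*} [CommRing R] (p : ℕ) (a : Ideal R) (k : ℕ) : Ideal R :=
  ∏ i ∈ Finset.range (k + 1), bracketPow a (p ^ i) ^ (k / p ^ i % p)

/-- The `q`-th Frobenius root `𝔠^[1/q]`: the smallest ideal `𝔡` with `𝔠 ⊆ 𝔡^[q]`.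
(Over a regular F-finite domain the infimum below is itself such an ideal, by
flatness of Frobenius, so it is indeed the smallest one.) -/
def frobRoot {R : Type*} [CommRing R] (q : ℕ) (c : Ideal R) : Ideal R :=
  sInf {d : Ideal R | c ≤ bracketPow d q}

/-- The `p`-rational Frobenius power `𝔞^[k/pᵉ] = (𝔞^[k])^[1/pᵉ]`, given in terms of a
representation `k/pᵉ` of a nonnegative `p`-rational number. -/
def pRatPow {R : Type*} [CommRing R] (p : ℕ) (a : Ideal R) (k e : ℕ) : Ideal R :=
  frobRoot (p ^ e) (frobPow p a k)

section Aux

/-- coefficient characterization of extended ideals for finite projective extensions -/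
theorem aux_coeff {R S : Type*} [CommRing R] [CommRing S] [IsNoetherianRing R] (f : R →+* S)
    (hf : f.Finite) (hfl : f.Flat) :
    ∃ s : S → (S → R), (∀ r x, s (f r * x) = fun i => r * s x i) ∧
      ∀ (I : Ideal R) (x : S), x ∈ I.map f ↔ ∀ i, s x i ∈ I := by
  algebraize [f]
  have : Module.FinitePresentation R S := Module.finitePresentation_of_finite R S
  have : Module.Projective R S := Module.Flat.projective_of_finitePresentation
  obtain ⟨s, hs⟩ := Module.projective_def.mp (inferInstance : Module.Projective R S)
  refine ⟨fun x => (s x : S → R), ?_, ?_⟩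
  · intro r x
    have : f r * x = r • x := (Algebra.smul_def r x).symm
    funext i
    change s (f r * x) i = r * s x i
    rw [this, map_smul]
    simp
  · intro I x
    change _ ↔ ∀ i, s x i ∈ I
    constructor
    · intro hx
      induction hx using Submodule.span_induction with
      | mem x h =>
        obtain ⟨r, hr, rfl⟩ := h
        intro i
        have : (f r : S) = r • (1 : S) := by rw [Algebra.smul_def, mul_one]; rfl
        rw [this, map_smul]
        exact I.mul_mem_right _ hr
      | zero => intro i; simp
      | add x y _ _ hx hy => intro i; rw [map_add]; exact I.add_mem (hx i) (hy i)
      | smul a x hx0 _ =>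
        clear * - hx0
        have h2 : a • x ∈ I.map f := Ideal.mul_mem_left _ _ hx0
        have h3 : ∀ z ∈ I.map f, ∀ b : S, ∀ i, s (b * z) i ∈ I := by
          intro z hz
          induction hz using Submodule.span_induction with
          | mem z h =>
            obtain ⟨r, hr, rfl⟩ := h
            intro b i
            have : b * (f r : S) = r • b := by rw [Algebra.smul_def, mul_comm]; rfl
            rw [this, map_smul]
            exact I.mul_mem_right _ hr
          | zero => intro b i; simp
          | add x y _ _ hx hy =>
            intro b i; rw [mul_add, map_add]; exact I.add_mem (hx b i) (hy b i)
          | smul c z _ ih => intro b i; rw [smul_eq_mul, ← mul_assoc]; exact ih _ i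
        exact h3 x hx0 a
    · intro h
      have hx := hs x
      rw [← hx, Finsupp.linearCombination_apply, Finsupp.sum]
      refine Ideal.sum_mem _ fun i _ => ?_
      rw [Algebra.smul_def]
      exact Ideal.mul_mem_right _ _ (Ideal.mem_map_of_mem f (h i))

theorem aux_sInf {R S : Type*} [CommRing R] [CommRing S] [IsNoetherianRing R] (f : R →+* S)
    (hf : f.Finite) (hfl : f.Flat) (c : Ideal S) :
    c ≤ (sInf {d : Ideal R | c ≤ d.map f}).map f := by
  obtain ⟨s, -, hs⟩ := aux_coeff f hf hfl
  intro x hx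
  rw [hs]
  intro i
  rw [Submodule.mem_sInf]
  intro d hd
  exact (hs d x).1 (hd hx) i

theorem aux_cancel {R S : Type*} [CommRing R] [CommRing S] [IsNoetherianRing R] (f : R →+* S)
    (hf : f.Finite) (hfl : f.Flat) (a : Ideal S) (ha : ∀ d : Ideal R, a ≤ d.map f → d = ⊤)
    (b d : Ideal R) : b.map f * a ≤ d.map f ↔ b ≤ d := by
  constructor
  · intro h
    obtain ⟨s, hs1, hs⟩ := aux_coeff f hf hfl
    intro x hx
    let D : Ideal R := Submodule.comap (LinearMap.mulLeft R x) d
    have hD : D = ⊤ := by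
      apply ha
      intro y hy
      rw [hs]
      intro i
      have h1 : f x * y ∈ d.map f := h (Ideal.mul_mem_mul (Ideal.mem_map_of_mem f hx) hy)
      have := (hs d _).1 h1 i
      rw [hs1] at this
      exact this
    have : (1 : R) ∈ D := by rw [hD]; trivial
    simpa [D] using this
  · intro h
    exact Ideal.mul_le_left.trans (Ideal.map_mono h)

variable {R : Type*} [CommRing R] (p : ℕ) [Fact p.Prime] [CharP R p]

theorem aux_bracket (a : Ideal R) (e : ℕ) :
    bracketPow a (p ^ e) = a.map (iterateFrobenius R p e) := rfl

theorem aux_bracket_le (a : Ideal R) (e : ℕ) : a.map (iterateFrobenius R p e) ≤ a ^ (p ^ e) := by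
  rw [Ideal.map_le_iff_le_comap]
  intro x hx
  rw [Ideal.mem_comap, iterateFrobenius_def]
  exact Ideal.pow_mem_pow hx _

theorem aux_map_map (a : Ideal R) (m e : ℕ) :
    (a.map (iterateFrobenius R p m)).map (iterateFrobenius R p e)
      = a.map (iterateFrobenius R p (m + e)) := by
  rw [Ideal.map_map]
  congr 1
  ext x
  simp [iterateFrobenius_def, pow_add, pow_mul]

theorem aux_ff (hFfin : (frobenius R p).Finite) (hreg : (frobenius R p).Flat) (e : ℕ) :
    (iterateFrobenius R p e).Finite ∧ (iterateFrobenius R p e).Flat := by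
  induction e with
  | zero =>
    have : iterateFrobenius R p 0 = RingHom.id R := by ext x; simp [iterateFrobenius_def]
    rw [this]
    exact ⟨RingHom.Finite.id R, RingHom.Flat.id R⟩
  | succ e ih =>
    have : iterateFrobenius R p (e + 1) = (frobenius R p).comp (iterateFrobenius R p e) := by
      ext x; simp [iterateFrobenius_def, frobenius_def, pow_succ, pow_mul]
    rw [this]
    exact ⟨hFfin.comp ih.1, RingHom.Flat.comp ih.2 hreg⟩

theorem aux_frobPow_range (a : Ideal R) (k N : ℕ) (h : k ≤ N) :
    frobPow p a k = ∏ i ∈ Finset.range (N + 1), bracketPow a (p ^ i) ^ (k / p ^ i % p) := by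
  unfold frobPow
  apply Finset.prod_subset
  · intro i; simp only [Finset.mem_range]; omega
  · intro i _ hi
    have hki : k < p ^ i :=
      lt_of_le_of_lt (by simp only [Finset.mem_range] at hi; omega)
        (Nat.lt_pow_self (Fact.out : p.Prime).one_lt (n := i))
    rw [Nat.div_eq_of_lt hki]
    simp

theorem aux_frobPow_rec (a : Ideal R) (m r : ℕ) (hr : r < p) :
    frobPow p a (m * p + r) = (frobPow p a m).map (iterateFrobenius R p 1) * a ^ r := by
  have hp : 1 < p := (Fact.out : p.Prime).one_lt
  have hm : m ≤ m * p + r := by nlinarith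
  rw [aux_frobPow_range p a (m * p + r) (m * p + r + 1) (by omega),
    aux_frobPow_range p a m (m * p + r) hm, Finset.prod_range_succ']
  congr 1
  · rw [← Ideal.mapHom_apply, map_prod]
    refine Finset.prod_congr rfl fun i _ => ?_
    rw [map_pow, Ideal.mapHom_apply, aux_bracket, aux_bracket, aux_map_map, pow_succ', ← Nat.div_div_eq_div_mul]
    congr 3
    rw [mul_comm, Nat.mul_add_div (by omega), Nat.div_eq_of_lt hr, add_zero]
  · congr 1
    · unfold bracketPow
      simp
    · simp [Nat.mod_eq_of_lt hr]

theorem aux_frobPow_zero (a : Ideal R) : frobPow p a 0 = ⊤ := by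
  simp [frobPow]

theorem aux_frobPow_succ (a : Ideal R) (k : ℕ) : frobPow p a (k + 1) ≤ frobPow p a k * a := by
  have hp : 1 < p := (Fact.out : p.Prime).one_lt
  induction k using Nat.strong_induction_on with
  | _ k ih =>
    obtain ⟨m, r, hr, rfl⟩ : ∃ m r, r < p ∧ k = m * p + r :=
      ⟨k / p, k % p, Nat.mod_lt _ (by omega), (Nat.div_add_mod' k p).symm⟩
    rw [aux_frobPow_rec p a m r hr, mul_assoc, ← pow_succ]
    by_cases h : r + 1 < p
    · rw [add_assoc, aux_frobPow_rec p a m _ h]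
    · have h1 : r + 1 = p := by omega
      have h2 : m * p + r + 1 = (m + 1) * p + 0 := by rw [add_assoc, h1]; ring
      rw [h2, aux_frobPow_rec p a (m + 1) 0 (by omega), pow_zero, mul_one, h1]
      rcases Nat.eq_zero_or_pos (m * p + r) with h0 | h0
      · omega
      · have hm : m < m * p + r := by nlinarith
        refine (Ideal.map_mono (ih m hm)).trans ?_
        rw [Ideal.map_mul]
        refine Ideal.mul_mono_right ?_
        simpa using aux_bracket_le p a 1

theorem aux_frobPow_anti (a : Ideal R) : Antitone (frobPow p a) :=
  antitone_nat_of_succ_le fun k => (aux_frobPow_succ p a k).trans Ideal.mul_le_left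

theorem aux_frobPow_mul (a : Ideal R) (k e : ℕ) :
    frobPow p a (k * p ^ e) = (frobPow p a k).map (iterateFrobenius R p e) := by
  have hp : 1 < p := (Fact.out : p.Prime).one_lt
  induction e with
  | zero =>
    have : iterateFrobenius R p 0 = RingHom.id R := by ext x; simp [iterateFrobenius_def]
    rw [this, Ideal.map_id, pow_zero, mul_one]
  | succ e ih =>
    have := aux_frobPow_rec p a (k * p ^ e) 0 (by omega)
    rw [pow_succ, ← mul_assoc]
    rw [add_zero, pow_zero, mul_one, ih, aux_map_map] at this
    exact this

theorem aux_root (hN : IsNoetherianRing R) (hFfin : (frobenius R p).Finite)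
    (hreg : (frobenius R p).Flat) (e n : ℕ) (a b : Ideal R)
    (ha : ∀ d : Ideal R, a ≤ d.map (iterateFrobenius R p e) → d = ⊤) :
    frobRoot (p ^ (n + e)) (b.map (iterateFrobenius R p e) * a) = frobRoot (p ^ n) b := by
  obtain ⟨h1, h2⟩ := aux_ff p hFfin hreg e
  unfold frobRoot
  congr 1
  ext d
  rw [Set.mem_setOf_eq, Set.mem_setOf_eq, aux_bracket, aux_bracket, ← aux_map_map]
  exact aux_cancel _ h1 h2 a ha b _

theorem aux_map_le (d : Ideal R) (e : ℕ) : d.map (iterateFrobenius R p e) ≤ d :=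
  (aux_bracket_le p d e).trans
    (Ideal.pow_le_self (pow_ne_zero _ (Fact.out : p.Prime).ne_zero))

theorem aux_rep (hN : IsNoetherianRing R) (hFfin : (frobenius R p).Finite)
    (hreg : (frobenius R p).Flat) (a : Ideal R) (k n e : ℕ) :
    pRatPow p a (k * p ^ e) (n + e) = pRatPow p a k n := by
  unfold pRatPow
  rw [aux_frobPow_mul, ← aux_root p hN hFfin hreg e n ⊤ (frobPow p a k), Ideal.mul_top]
  intro d hd
  exact top_le_iff.1 (hd.trans (aux_map_le p d e))

theorem aux_mono (hN : IsNoetherianRing R) (hFfin : (frobenius R p).Finite)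
    (hreg : (frobenius R p).Flat) (a : Ideal R) (k m l n : ℕ) (h : k * p ^ n ≤ l * p ^ m) :
    pRatPow p a l n ≤ pRatPow p a k m := by
  rw [← aux_rep p hN hFfin hreg a l n m, ← aux_rep p hN hFfin hreg a k m n, add_comm n m]
  unfold pRatPow frobRoot
  refine sInf_le_sInf ?_
  intro d hd
  exact (aux_frobPow_anti p a h).trans hd

theorem aux_mono_rat (hN : IsNoetherianRing R) (hFfin : (frobenius R p).Finite)
    (hreg : (frobenius R p).Flat) (a : Ideal R) (k m l n : ℕ)
    (h : (k : ℚ) / (p : ℚ) ^ m ≤ (l : ℚ) / (p : ℚ) ^ n) :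
    pRatPow p a l n ≤ pRatPow p a k m := by
  apply aux_mono p hN hFfin hreg
  have hp : (0 : ℚ) < p := by exact_mod_cast (Fact.out : p.Prime).pos
  rw [div_le_div_iff₀ (by positivity) (by positivity)] at h
  exact_mod_cast h

theorem aux_exists [IsDomain R] (hN : IsNoetherianRing R) (hFfin : (frobenius R p).Finite)
    (hreg : (frobenius R p).Flat) (a : Ideal R) (ha : a ≠ ⊥) :
    ∃ e : ℕ, ∀ d : Ideal R, a ≤ d.map (iterateFrobenius R p (e + 1)) → d = ⊤ := by
  let I : ℕ →o Ideal R := ⟨fun e => frobRoot (p ^ e) a, monotone_nat_of_le_succ (by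
    intro e
    refine sInf_le_sInf ?_
    intro d hd
    rw [Set.mem_setOf_eq, aux_bracket] at hd ⊢
    rw [add_comm, ← aux_map_map] at hd
    exact hd.trans (Ideal.map_mono (aux_map_le p d 1)))⟩
  obtain ⟨N, hstab⟩ := monotone_stabilizes_iff_noetherian.mpr hN I
  have key : ∀ e, N ≤ e → a ≤ (I N).map (iterateFrobenius R p e) := by
    intro e he
    obtain ⟨h1, h2⟩ := aux_ff p hFfin hreg e
    rw [hstab e he]
    exact aux_sInf _ h1 h2 a
  have htop : I N = ⊤ := by
    by_contra hne
    apply ha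
    rw [eq_bot_iff, ← Ideal.iInf_pow_eq_bot_of_isDomain (I N) hne]
    refine le_iInf fun i => ?_
    refine (key (max N i) (le_max_left _ _)).trans ((aux_bracket_le p _ _).trans
      (Ideal.pow_le_pow_right ?_))
    exact (le_max_right N i).trans (Nat.lt_pow_self (Fact.out : p.Prime).one_lt).le
  refine ⟨N, fun d hd => ?_⟩
  rw [← top_le_iff, ← htop, hstab (N + 1) (by omega)]
  exact sInf_le hd

end Aux

/-- right constancy of rational Frobenius powers.  For the
`p`-rational number `c = k/pⁿ`: there is a power `q = p^{n+e}` of `p` with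
`𝔞^[c + 1/q] = 𝔞^[c]` (note `c + 1/p^{n+e} = (k·pᵉ + 1)/p^{n+e}`), and consequently
`𝔞^[c'] = 𝔞^[c]` for all `p`-rational `c' ≥ c` sufficiently close to `c`. -/
theorem stmt_14 {R : Type*} [CommRing R] [IsDomain R] [IsNoetherianRing R]
    (p : ℕ) [Fact p.Prime] [CharP R p]
    (hFfin : (frobenius R p).Finite) (hreg : (frobenius R p).Flat)
    (a : Ideal R) (ha : a ≠ ⊥) (k n : ℕ) :
    (∃ e : ℕ, pRatPow p a (k * p ^ e + 1) (n + e) = pRatPow p a k n) ∧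
      ∃ ε : ℚ, 0 < ε ∧ ∀ k' e' : ℕ,
        (k : ℚ) / (p : ℚ) ^ n ≤ (k' : ℚ) / (p : ℚ) ^ e' →
        (k' : ℚ) / (p : ℚ) ^ e' ≤ (k : ℚ) / (p : ℚ) ^ n + ε →
        pRatPow p a k' e' = pRatPow p a k n := by

  obtain ⟨e, he⟩ := aux_exists p ‹_› hFfin hreg a ha
  have hp : 1 < p := (Fact.out : p.Prime).one_lt
  have h1 : pRatPow p a (k * p ^ (e + 1) + 1) (n + (e + 1)) = pRatPow p a k n := by
    unfold pRatPow
    rw [← aux_root p ‹_› hFfin hreg (e + 1) n a (frobPow p a k) he, pow_succ p e, ← mul_assoc,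
      aux_frobPow_rec p a (k * p ^ e) 1 hp, aux_frobPow_mul, aux_map_map, pow_one]
  refine ⟨⟨e + 1, h1⟩, 1 / (p : ℚ) ^ (n + (e + 1)), ?_, ?_⟩
  · have : (0 : ℚ) < p := by exact_mod_cast (Fact.out : p.Prime).pos
    positivity
  · intro k' e' hl hu
    apply le_antisymm
    · exact aux_mono_rat p ‹_› hFfin hreg a _ _ _ _ hl
    · rw [← h1]
      apply aux_mono_rat p ‹_› hFfin hreg a
      refine hu.trans (le_of_eq ?_)
      have : (p : ℚ) ≠ 0 := by exact_mod_cast (Fact.out : p.Prime).ne_zero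
      push_cast
      field_simp
      try ring
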